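/- For polynomial curves γ₁, γ₂ : [0,1] → ℝ^d, the function f(t₁,t₂) = ‖γ₁(t₁) − γ₂(t₂)‖₂² has only finitely many critical values. -/

import Mathlib

open Polynomial TensorProduct KaehlerDifferential

/-- In characteristic zero, the differential of a transcendental element of an essentially finitely
generated field extension does not vanish. -/
theorem KaehlerDifferential.D_ne_zero_of_transcendental {k K : Type*} [Field k] [CharZero k]
    [Field K] [Algebra k K] [Algebra.EssFiniteType k K] {a : K} (ha : Transcendental k a) :
    D k K a ≠ 0 := by
  let : Algebra k[X] K := (aeval (R := k) a).toAlgebra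
  have hX (g : k[X]) : algebraMap k[X] K g = aeval a g := rfl
  have : IsScalarTower k k[X] K := .of_algebraMap_eq fun r ↦ by simp [hX]
  have : FaithfulSMul k[X] K :=
    (faithfulSMul_iff_algebraMap_injective _ _).mpr (transcendental_iff_injective.mp ha)
  let : Algebra (FractionRing k[X]) K := FractionRing.liftAlgebra k[X] K
  have : IsScalarTower k[X] (FractionRing k[X]) K := inferInstance
  have : IsScalarTower k (FractionRing k[X]) K := .to₁₃₄ k k[X] (FractionRing k[X]) K
  have : CharZero (FractionRing k[X]) :=
    charZero_of_injective_algebraMap (algebraMap k _).injective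
  have : Algebra.EssFiniteType (FractionRing k[X]) K := .of_comp k _ _
  have : Algebra.FormallySmooth k[X] (FractionRing k[X]) :=
    .of_isLocalization (nonZeroDivisors k[X])
  have : Algebra.FormallySmooth k[X] K := .comp _ (FractionRing k[X]) _
  have hinj : Function.Injective (mapBaseChange k k[X] K) := by
    rw [injective_iff_map_eq_zero]
    intro y hy
    obtain ⟨z, rfl⟩ := (Algebra.H1Cotangent.exact_δ_mapBaseChange k k[X] K y).mp hy
    rw [Subsingleton.elim z 0, map_zero]
  intro h
  have h0 : (1 : K) ⊗ₜ[k[X]] D k k[X] X = 0 := hinj (by simp [hX, h])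
  have := congr(TensorProduct.rid k[X] K ((polynomialEquiv k).toLinearMap.lTensor K $h0))
  simp at this

theorem KaehlerDifferential.D_algebraMap_eq_zero_of_pderiv {k σ A : Type*} [Field k]
    [Fintype σ] [CommRing A] [Algebra k A] [Algebra (MvPolynomial σ k) A]
    [IsScalarTower k (MvPolynomial σ k) A] (F : MvPolynomial σ k)
    (hF : ∀ i, algebraMap (MvPolynomial σ k) A (MvPolynomial.pderiv i F) = 0) :
    D k A (algebraMap (MvPolynomial σ k) A F) = 0 := by
  rw [← KaehlerDifferential.map_D k k (MvPolynomial σ k) A,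
    ← (mvPolynomialBasis k σ).sum_repr (D k _ F), map_sum]
  refine Finset.sum_eq_zero fun i _ ↦ ?_
  rw [map_smul, mvPolynomialBasis_repr_apply, ← algebraMap_smul A, hF, zero_smul]

theorem MvPolynomial.exists_aeval_mem_of_pderiv_mem {k σ : Type*} [Field k] [CharZero k]
    [Fintype σ] (F : MvPolynomial σ k) (P : Ideal (MvPolynomial σ k)) [P.IsPrime]
    (hF : ∀ i, pderiv i F ∈ P) : ∃ g : k[X], g ≠ 0 ∧ Polynomial.aeval F g ∈ P := by
  let A := MvPolynomial σ k ⧸ P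
  have hker (G : MvPolynomial σ k) :
      algebraMap (MvPolynomial σ k) (FractionRing A) G = 0 ↔ G ∈ P := by
    rw [IsScalarTower.algebraMap_apply (MvPolynomial σ k) A (FractionRing A),
      FaithfulSMul.algebraMap_eq_zero_iff]
    exact Ideal.Quotient.eq_zero_iff_mem
  have : Algebra.EssFiniteType A (FractionRing A) := .of_isLocalization _ (nonZeroDivisors A)
  have : Algebra.EssFiniteType k (FractionRing A) := .comp k A _
  have halg : IsAlgebraic k (algebraMap (MvPolynomial σ k) (FractionRing A) F) := by
    by_contra h
    exact D_ne_zero_of_transcendental h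
      (D_algebraMap_eq_zero_of_pderiv F fun i ↦ (hker _).mpr (hF i))
  obtain ⟨g, hg, h⟩ := halg
  exact ⟨g, hg, (hker _).mp (by rw [← h, Polynomial.aeval_algebraMap_apply])⟩

/-- A polynomial in finitely many variables over a field of characteristic zero has only finitely
many critical values. -/
theorem MvPolynomial.finite_criticalValues {k σ : Type*} [Field k] [CharZero k] [Fintype σ]
    (F : MvPolynomial σ k) :
    ((fun x ↦ eval x F) '' {x | ∀ i, eval x (pderiv i F) = 0}).Finite := by
  let J := Ideal.span (Set.range fun i ↦ pderiv i F)
  have hex (P : Ideal (MvPolynomial σ k)) (hP : P ∈ J.minimalPrimes) :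
      ∃ g : k[X], g ≠ 0 ∧ Polynomial.aeval F g ∈ P :=
    have := hP.1.1
    exists_aeval_mem_of_pderiv_mem F P fun i ↦ hP.1.2 (Ideal.subset_span ⟨i, rfl⟩)
  choose! g hg hgP using hex
  refine ((Ideal.finite_minimalPrimes_of_isNoetherianRing _ J).biUnion
    (t := fun P ↦ {z | (g P).IsRoot z}) fun P hP ↦
      Polynomial.finite_setOfPred_isRoot (hg P hP)).subset ?_
  rintro _ ⟨x, hx, rfl⟩
  have hJ : J ≤ RingHom.ker (eval x) := Ideal.span_le.mpr (by rintro _ ⟨i, rfl⟩; exact hx i)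
  have : (RingHom.ker (eval x)).IsPrime := RingHom.ker_isPrime _
  obtain ⟨P, hP, hPx⟩ := Ideal.exists_minimalPrimes_le hJ
  have h : eval x (Polynomial.aeval F (g P)) = 0 := hPx (hgP P hP)
  refine Set.mem_biUnion hP ?_
  have h' := Polynomial.aeval_algHom_apply (aeval x) F (g P)
  simpa [aeval_eq_eval, h] using h'

theorem MvPolynomial.hasFDerivAt_eval {σ : Type*} [Fintype σ]
    (F : MvPolynomial σ ℝ) (x : σ → ℝ) :
    HasFDerivAt (fun y : σ → ℝ ↦ eval y F)
      (∑ i, eval x (pderiv i F) • ContinuousLinearMap.proj (R := ℝ) (φ := fun _ : σ ↦ ℝ) i) x := by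
  classical
  induction F using MvPolynomial.induction_on with
  | C a => simpa using hasFDerivAt_const a x
  | add p q hp hq =>
    simp only [map_add, add_smul, Finset.sum_add_distrib]
    exact hp.add hq
  | mul_X p i hp =>
    have h := hp.mul (hasFDerivAt_apply (𝕜 := ℝ) (F' := fun _ : σ ↦ ℝ) i x)
    simp only [map_mul, eval_X]
    refine h.congr_fderiv ?_
    ext v
    simp [pderiv_X, Pi.single_apply, apply_ite (eval x), add_mul, Finset.sum_add_distrib,
      Finset.mul_sum, mul_assoc]

/-- For polynomial curves `γ₁ = (p i)ᵢ` and `γ₂ = (q i)ᵢ` in `ℝ^d`, the function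
`f(t₁,t₂) = ‖γ₁ t₁ − γ₂ t₂‖₂² = ∑ᵢ (pᵢ(t₁) − qᵢ(t₂))²` has only finitely many critical
values on `[0,1]²`. -/
theorem stmt_11 {d : ℕ} (p q : Fin d → Polynomial ℝ)
    (f : ℝ × ℝ → ℝ)
    (hf : ∀ x : ℝ × ℝ, f x = ∑ i, ((p i).eval x.1 - (q i).eval x.2) ^ 2) :
    (f '' {x : ℝ × ℝ | x ∈ Set.Icc (0:ℝ) 1 ×ˢ Set.Icc (0:ℝ) 1 ∧
        fderiv ℝ f x = 0}).Finite := by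
  let F : MvPolynomial (Fin 2) ℝ :=
    ∑ i, (aeval (MvPolynomial.X 0) (p i) - aeval (MvPolynomial.X 1) (q i)) ^ 2
  let e : (ℝ × ℝ) ≃L[ℝ] (Fin 2 → ℝ) := (ContinuousLinearEquiv.finTwoArrow ℝ ℝ).symm
  have heval (y : Fin 2 → ℝ) (j : Fin 2) (r : ℝ[X]) :
      MvPolynomial.eval y (aeval (MvPolynomial.X j) r) = r.eval (y j) := by
    have h := aeval_algHom_apply (MvPolynomial.aeval (R := ℝ) y) (MvPolynomial.X j) r
    simpa using h.symm
  have hfF : f = fun x ↦ MvPolynomial.eval (e x) F := by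
    funext x
    simp [hf, F, heval, e]
  refine F.finite_criticalValues.subset ?_
  rintro _ ⟨x, ⟨-, hx⟩, rfl⟩
  refine ⟨e x, fun i ↦ ?_, by rw [hfF]⟩
  have h := (F.hasFDerivAt_eval (e x)).comp x e.hasFDerivAt
  rw [hfF] at hx
  replace hx := h.fderiv.symm.trans hx
  have hi := congr($hx (e.symm (Pi.single i 1)))
  fin_cases i <;> simpa [Pi.single_apply] using hi
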